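/- Let N ≥ 1 and 1 ≤ M ≤ N be integers, let Σ_1,…,Σ_N ∈ ℂ be pairwise distinct and ζ_1,…,ζ_N ∈ ℂ. Let V be the N×N Vandermonde matrix V_{ij} = Σ_i^{j−1}, T = diag(ζ_1,…,ζ_N), and E = V^{−1}TV. Then the determinant of the bottom-left M×M submatrix of E (rows N−M+1,…,N, columns 1,…,M) equals ∑_{S ⊆ {1,…,N}, |S| = M} (∏_{i∈S} ζ_i) · ∏_{i∈S} ∏_{j∈S^c} (Σ_i − Σ_j)^{−1}, where S^c = {1,…,N}∖S. -/

import Mathlib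

open Finset Matrix

/-!
Put `K = N - M`. Since `V E = T V`, multiplying the minor by `det V` gives `D(ζ)`, the determinant
of the matrix with columns `1, Σ, …, Σ^(K-1), ζ, ζ Σ, …, ζ Σ^(M-1)` (entrywise products). The
Leibniz formula shows that `D(a)` is a multilinear polynomial `∑ c_S ∏_{i ∈ S} a_i` over the subsets
`S` of size `M`. To find `c_S` without tracking signs, take `a_i = ∏_{j ∉ S} (Σ_i - Σ_j)`: this
vanishes off `S`, so only the `S`-term survives, while `a_i` is the value at `Σ_i` of a monic
polynomial of degree `K`, so column operations turn `D(a)` into `det V`.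
-/

section RowScaling

variable {n R : Type*} [DecidableEq n] [CommRing R]

/-- The matrix `A` with each row `i` multiplied by `a i`, but only within the columns in `T`. -/
def rowScaleOn (T : Finset n) (a : n → R) (A : Matrix n n R) : Matrix n n R :=
  of fun i j => if j ∈ T then a i * A i j else A i j

/-- The part of `A` supported on the two complementary blocks `S × T` and `Sᶜ × Tᶜ`. For
`#S = #T`, its determinant is the term belonging to the rows `S` in the Laplace expansion of `det A`
along the columns `T`, sign included. -/
def blockMask (S T : Finset n) (A : Matrix n n R) : Matrix n n R :=
  of fun i j => if i ∈ S ↔ j ∈ T then A i j else 0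

variable [Fintype n]

lemma prod_rowScaleOn_perm (T : Finset n) (a : n → R) (A : Matrix n n R) (σ : Equiv.Perm n) :
    ∏ j, rowScaleOn T a A (σ j) j = (∏ i ∈ T.map σ.toEmbedding, a i) * ∏ j, A (σ j) j := by
  have h (j : n) : rowScaleOn T a A (σ j) j = (if j ∈ T then a (σ j) else 1) * A (σ j) j := by
    simp [rowScaleOn, ite_mul]
  simp_rw [h, prod_mul_distrib, prod_ite_mem, univ_inter, prod_map, Equiv.coe_toEmbedding]

lemma prod_blockMask_perm (S T : Finset n) (A : Matrix n n R) (σ : Equiv.Perm n) :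
    ∏ j, blockMask S T A (σ j) j = if T.map σ.toEmbedding = S then ∏ j, A (σ j) j else 0 := by
  have h : T.map σ.toEmbedding = S ↔ ∀ j, σ j ∈ S ↔ j ∈ T := by
    rw [Finset.ext_iff, ← σ.forall_congr_right]
    simp [iff_comm]
  simp only [blockMask, of_apply, h, prod_ite_zero, mem_univ, true_imp_iff]

theorem det_rowScaleOn_eq_sum (T : Finset n) (a : n → R) (A : Matrix n n R) :
    (rowScaleOn T a A).det =
      ∑ S ∈ powersetCard #T univ, (∏ i ∈ S, a i) * (blockMask S T A).det := by
  simp_rw [det_apply', prod_rowScaleOn_perm, prod_blockMask_perm, mul_sum]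
  rw [sum_comm]
  refine sum_congr rfl fun σ _ => ?_
  have hσ : T.map σ.toEmbedding ∈ powersetCard #T univ := by simp
  rw [sum_eq_single_of_mem _ hσ fun S _ hS => by simp [hS.symm]]
  simp [mul_left_comm]

lemma det_rowScaleOn_of_eq_zero_off {S T : Finset n} (hST : #S = #T) {a : n → R}
    (ha : ∀ i ∉ S, a i = 0) (A : Matrix n n R) :
    (rowScaleOn T a A).det = (∏ i ∈ S, a i) * (blockMask S T A).det := by
  rw [det_rowScaleOn_eq_sum]
  refine sum_eq_single_of_mem S (by simp [hST]) fun S' hS' hne => ?_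
  have hcard : #S ≤ #S' := (hST.trans (mem_powersetCard.1 hS').2.symm).le
  obtain ⟨i, hi, hiS⟩ := not_subset.1 fun hsub => hne (eq_of_subset_of_card_le hsub hcard)
  rw [prod_eq_zero hi (ha i hiS), zero_mul]

end RowScaling

section Vandermonde

variable {n : ℕ} {R : Type*} [CommRing R]

/-- Two Vandermonde blocks side by side: the columns are the powers `0, …, K - 1` of `v`, then the
powers of `v` from `0` again. Scaling the rows of the second block by `a` gives the matrix whose
determinant is `D(a)`. -/
def restartedVandermonde (K : ℕ) (v : Fin n → R) : Matrix (Fin n) (Fin n) R :=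
  of fun i j => if (j : ℕ) < K then v i ^ (j : ℕ) else v i ^ (j - K : ℕ)

/-- The columns of the second block of `restartedVandermonde K`. -/
def restartedCols (n K : ℕ) : Finset (Fin n) := {j | K ≤ (j : ℕ)}

lemma card_restartedCols (n K : ℕ) : #(restartedCols n K) = n - K := by
  have h : restartedCols n K = ({j | (j : ℕ) < K} : Finset (Fin n))ᶜ := by
    simp [restartedCols, compl_filter]
  rw [h, card_compl, Fintype.card_fin, Fin.card_filter_val_lt]
  omega

lemma rowScaleOn_restartedVandermonde_apply (K : ℕ) (v a : Fin n → R) (i j : Fin n) :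
    rowScaleOn (restartedCols n K) a (restartedVandermonde K v) i j =
      if (j : ℕ) < K then v i ^ (j : ℕ) else a i * v i ^ (j - K : ℕ) := by
  by_cases h : (j : ℕ) < K <;> simp [rowScaleOn, restartedCols, restartedVandermonde, h]

open Polynomial in
lemma det_rowScaleOn_restartedVandermonde_eval (v : Fin n → R) {p : R[X]} (hp : p.Monic) :
    (rowScaleOn (restartedCols n p.natDegree) (fun i => p.eval (v i))
      (restartedVandermonde p.natDegree v)).det = (vandermonde v).det := by
  nontriviality R
  let q (j : Fin n) : R[X] :=
    if (j : ℕ) < p.natDegree then X ^ (j : ℕ) else p * X ^ (j - p.natDegree : ℕ)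
  have hdeg (j : Fin n) : (q j).natDegree = j := by
    by_cases h : (j : ℕ) < p.natDegree
    · simp [q, h]
    · simp only [q, h, if_false, hp.natDegree_mul (monic_X_pow _), natDegree_X_pow]
      omega
  have hmonic (j : Fin n) : (q j).Monic := by
    by_cases h : (j : ℕ) < p.natDegree
    · simp [q, h, monic_X_pow]
    · simp [q, h, hp.mul (monic_X_pow _)]
  rw [det_eval_matrixOfPolynomials_eq_det_vandermonde v q hdeg hmonic]
  congr 1
  ext i j
  by_cases h : (j : ℕ) < p.natDegree <;> simp [rowScaleOn_restartedVandermonde_apply, q, h]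

open Polynomial in
lemma det_vandermonde_eq_prod_mul_det_blockMask (v : Fin n → R) {S : Finset (Fin n)} {K : ℕ}
    (hS : #Sᶜ = K) :
    (vandermonde v).det = (∏ i ∈ S, ∏ j ∈ Sᶜ, (v i - v j)) *
      (blockMask S (restartedCols n K) (restartedVandermonde K v)).det := by
  nontriviality R
  let p : R[X] := ∏ j ∈ Sᶜ, (X - C (v j))
  have hdeg : p.natDegree = K := by simp [p, hS]
  have hcard : #S = #(restartedCols n K) := by
    rw [card_restartedCols, ← hS, card_compl, Fintype.card_fin,
      Nat.sub_sub_self (card_finset_fin_le S)]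
  have heval (i : Fin n) : p.eval (v i) = ∏ j ∈ Sᶜ, (v i - v j) := by simp [p, eval_prod]
  have hzero : ∀ i ∉ S, p.eval (v i) = 0 := fun i hi => by
    rw [heval, prod_eq_zero (mem_compl.2 hi) (sub_self _)]
  rw [← det_rowScaleOn_restartedVandermonde_eval v (monic_prod_X_sub_C v Sᶜ), hdeg,
    det_rowScaleOn_of_eq_zero_off hcard hzero]
  simp_rw [heval]

end Vandermonde

section Minor

variable {R : Type*} [CommRing R]

lemma det_mul_det_submatrix_inr {m n : Type*} [Fintype m] [Fintype n] [DecidableEq m]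
    [DecidableEq n] (V E : Matrix (m ⊕ n) (m ⊕ n) R) (f : n → m ⊕ n) :
    V.det * (E.submatrix Sum.inr f).det =
      (fromCols (V.submatrix id Sum.inl) ((V * E).submatrix id f)).det := by
  have hblocks : fromCols ((1 : Matrix (m ⊕ n) (m ⊕ n) R).submatrix id Sum.inl)
      (E.submatrix id f) =
        fromBlocks 1 (E.submatrix Sum.inl f) 0 (E.submatrix Sum.inr f) := by
    ext (i | i) (j | j) <;> simp [one_apply]
  have hminor := congrArg det hblocks
  rw [det_fromBlocks_zero₂₁, det_one, one_mul] at hminor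
  rw [← hminor, ← det_mul, mul_fromCols]
  congr 2
  ext
  simp [Matrix.mul_apply, Matrix.one_apply]

lemma det_vandermonde_mul_det_submatrix_natAdd {K M : ℕ} {v a : Fin (K + M) → R}
    {E : Matrix (Fin (K + M)) (Fin (K + M)) R}
    (hE : vandermonde v * E = diagonal a * vandermonde v) :
    (vandermonde v).det *
        (E.submatrix (Fin.natAdd K) (Fin.castLE (Nat.le_add_left M K))).det =
      (rowScaleOn (restartedCols (K + M) K) a (restartedVandermonde K v)).det := by
  let e : Fin K ⊕ Fin M ≃ Fin (K + M) := finSumFinEquiv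
  have h := det_mul_det_submatrix_inr ((vandermonde v).submatrix e e) (E.submatrix e e)
    (e.symm ∘ Fin.castLE (Nat.le_add_left M K))
  rw [det_submatrix_equiv_self, submatrix_mul_equiv, hE] at h
  rw [← det_submatrix_equiv_self e (rowScaleOn _ _ _)]
  convert h using 2
  · congr 1
    ext i j
    simp [e]
  · ext i (j | j) <;> simp [e, rowScaleOn_restartedVandermonde_apply, vandermonde_apply]

end Minor

theorem bottomLeft_minor_eq_sum_over_subsets_general {F : Type*} [Field F]
    (N M : ℕ) (hMN : M ≤ N) (Sg ζ : Fin N → F) (hSg : Function.Injective Sg) :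
    (((vandermonde Sg)⁻¹ * diagonal ζ * vandermonde Sg).submatrix
        (Fin.cast (Nat.sub_add_cancel hMN) ∘ Fin.natAdd (N - M)) (Fin.castLE hMN)).det =
    ∑ S ∈ powersetCard M univ,
      (∏ i ∈ S, ζ i) * ∏ i ∈ S, ∏ j ∈ Sᶜ, (Sg i - Sg j)⁻¹ := by
  obtain ⟨K, rfl⟩ := Nat.exists_eq_add_of_le' hMN
  have hV : (vandermonde Sg).det ≠ 0 := det_vandermonde_ne_zero_iff.2 hSg
  have hrows : Fin.cast (Nat.sub_add_cancel hMN) ∘ Fin.natAdd (K + M - M) =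
      (Fin.natAdd K : Fin M → Fin (K + M)) := by
    ext; simp
  have hVE : vandermonde Sg * ((vandermonde Sg)⁻¹ * diagonal ζ * vandermonde Sg) =
      diagonal ζ * vandermonde Sg := by
    rw [Matrix.mul_assoc, mul_nonsing_inv_cancel_left _ _ hV.isUnit]
  apply mul_left_cancel₀ hV
  rw [hrows, det_vandermonde_mul_det_submatrix_natAdd hVE, det_rowScaleOn_eq_sum,
    card_restartedCols, Nat.add_sub_cancel_left, mul_sum]
  refine sum_congr rfl fun S hS => ?_
  have hcard : #S = M := (mem_powersetCard.1 hS).2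
  have hC := det_vandermonde_eq_prod_mul_det_blockMask Sg (S := S) (K := K)
    (by simp [card_compl, hcard])
  have hprod : ∏ i ∈ S, ∏ j ∈ Sᶜ, (Sg i - Sg j) ≠ 0 := left_ne_zero_of_mul (hC ▸ hV)
  simp_rw [prod_inv_distrib]
  rw [hC]
  field_simp

/-- The determinant of the bottom-left M×M submatrix of E = V⁻¹ T V,
where V is the Vandermonde matrix of the pairwise distinct Σᵢ and T = diag(ζ), equals
∑_{S ⊆ {1,…,N}, |S| = M} (∏_{i∈S} ζᵢ) ∏_{i∈S} ∏_{j∈Sᶜ} (Σᵢ − Σⱼ)⁻¹. -/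
theorem bottomLeft_minor_eq_sum_over_subsets
    (N M : ℕ) (hN : 1 ≤ N) (hM1 : 1 ≤ M) (hMN : M ≤ N)
    (Sg ζ : Fin N → ℂ) (hSg : Function.Injective Sg) :
    ((((Matrix.vandermonde Sg)⁻¹ * Matrix.diagonal ζ * Matrix.vandermonde Sg).submatrix
        (fun i : Fin M => (⟨N - M + i.val, by have := i.isLt; omega⟩ : Fin N))
        (Fin.castLE hMN)).det)
      =
    ∑ S ∈ Finset.powersetCard M (Finset.univ : Finset (Fin N)),
      (∏ i ∈ S, ζ i) * ∏ i ∈ S, ∏ j ∈ Sᶜ, (Sg i - Sg j)⁻¹ :=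
  bottomLeft_minor_eq_sum_over_subsets_general N M hMN Sg ζ hSg
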